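/- Existence of a V-factorizable representative: for every density g on E^{V+W} there exists a V-factorizable density g̃ on E^{V+W} such that β_W(g̃) = β_W(g). -/

import Mathlib

open Finset
open scoped Classical

/-- Patterns over the integer interval `{A,...,B}` with values in `E`. -/
abbrev Pat (E : Type) (A B : ℤ) : Type := {x // x ∈ Finset.Icc A B} → E

/-- Evaluation of a pattern at an integer site (arbitrary value outside the domain). -/
noncomputable def ev {E : Type} [Nonempty E] {A B : ℤ} (φ : Pat E A B) (j : ℤ) : E :=
  if h : j ∈ Finset.Icc A B then φ ⟨j, h⟩ else Classical.arbitrary E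

/-- The window `σ_i(φ)|_V` of a pattern `φ`, a pattern on `V = {-p,...,q}`. -/
noncomputable def win {E : Type} [Nonempty E] (p q : ℕ) {A B : ℤ} (i : ℤ) (φ : Pat E A B) :
    Pat E (-(p : ℤ)) (q : ℤ) :=
  fun v => ev φ (i + v.1)

/-- A density on a finite type: nonnegative weights summing to one. -/
def IsDensity {α : Type} [Fintype α] (g : α → ℝ) : Prop :=
  (∀ x, 0 ≤ g x) ∧ ∑ x, g x = 1

/-- The distribution associated with a weight function, evaluated on an event. -/
noncomputable def Pr {α : Type} [Fintype α] (g : α → ℝ) (P : α → Prop) : ℝ :=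
  ∑ x, if P x then g x else 0

/-- Conditional probability `μ[P | Q] = μ[P ∩ Q]/μ[Q]` (`0` if `0/0`). -/
noncomputable def condPr {α : Type} [Fintype α] (g : α → ℝ) (P Q : α → Prop) : ℝ :=
  Pr g (fun x => P x ∧ Q x) / Pr g Q

/-- The marginalization operator `β_W`. -/
noncomputable def beta {E : Type} [Fintype E] [DecidableEq E] [Nonempty E]
    (p q : ℕ) (t u : ℤ) (g : Pat E (-(p : ℤ) - t) ((q : ℤ) + u) → ℝ) (i : ℤ)
    (ψ : Pat E (-(p : ℤ)) (q : ℤ)) : ℝ :=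
  Pr g (fun χ => win p q i χ = ψ)

/-- The reconstruction operator `α_{W,i}`. -/
noncomputable def alpha {E : Type} [Fintype E] [DecidableEq E] [Nonempty E]
    (p q : ℕ) (t u : ℤ) (g : ℤ → Pat E (-(p : ℤ)) (q : ℤ) → ℝ) (i : ℤ)
    (ψ : Pat E (-(p : ℤ) - t) ((q : ℤ) + u)) : ℝ :=
  (∏ k ∈ Finset.Icc (-t) (i - 1),
      condPr (g k) (fun χ => ev χ (-(p : ℤ)) = ev ψ (k + -(p : ℤ)))
        (fun χ => ∀ v ∈ Finset.Icc (-(p : ℤ) + 1) (q : ℤ), ev χ v = ev ψ (k + v))) *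
    g i (win p q i ψ) *
    (∏ l ∈ Finset.Icc (i + 1) u,
      condPr (g l) (fun χ => ev χ (q : ℤ) = ev ψ (l + (q : ℤ)))
        (fun χ => ∀ v ∈ Finset.Icc (-(p : ℤ)) ((q : ℤ) - 1), ev χ v = ev ψ (l + v)))

/-- Extendable de Bruijn densities. -/
def Extendable {E : Type} [Fintype E] [DecidableEq E] [Nonempty E]
    (p q : ℕ) (t u : ℤ) (g : ℤ → Pat E (-(p : ℤ)) (q : ℤ) → ℝ) : Prop :=
  ∀ i ∈ Finset.Icc (-t) u, ∀ φ, 0 < g i φ →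
    ∃ ψ : Pat E (-(p : ℤ) - t) ((q : ℤ) + u),
      win p q i ψ = φ ∧ ∀ j ∈ Finset.Icc (-t) u, 0 < g j (win p q j ψ)

/-- The event `{χ : χ|_S = ψ|_S}`. -/
def agreeOn {E : Type} [Nonempty E] {A B : ℤ} (S : Finset ℤ) (ψ χ : Pat E A B) : Prop :=
  ∀ j ∈ S, ev χ j = ev ψ j

/-- Probability that a pattern agrees with `x` on `S`. -/
noncomputable def MM {E : Type} [Fintype E] [Nonempty E] {A B : ℤ} (h : Pat E A B → ℝ)
    (S : Finset ℤ) (x : ℤ → E) : ℝ :=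
  Pr h (fun χ => ∀ j ∈ S, ev χ j = x j)

section helpers
variable {E : Type} [Fintype E] [Nonempty E] {A B : ℤ}

theorem Pr_congr' {α : Type} [Fintype α] (h : α → ℝ) {P Q : α → Prop}
    (hPQ : ∀ x, P x ↔ Q x) : Pr h P = Pr h Q := by
  have : P = Q := funext fun x => propext (hPQ x)
  rw [this]

theorem MM_congr (h : Pat E A B → ℝ) {S : Finset ℤ} {x y : ℤ → E}
    (hxy : ∀ j ∈ S, x j = y j) : MM h S x = MM h S y := by
  apply Pr_congr'
  intro χ
  exact forall₂_congr fun j hj => by rw [hxy j hj]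

theorem MM_nonneg {h : Pat E A B → ℝ} (hh : ∀ x, 0 ≤ h x) (S : Finset ℤ) (x : ℤ → E) :
    0 ≤ MM h S x := by
  unfold MM Pr
  apply Finset.sum_nonneg
  intro i _
  split_ifs
  · exact hh i
  · exact le_rfl

theorem MM_anti {h : Pat E A B → ℝ} (hh : ∀ x, 0 ≤ h x) {S T : Finset ℤ} (hST : S ⊆ T)
    (x : ℤ → E) : MM h T x ≤ MM h S x := by
  unfold MM Pr
  apply Finset.sum_le_sum
  intro χ _
  by_cases h1 : ∀ j ∈ T, ev χ j = x j
  · have h2 : ∀ j ∈ S, ev χ j = x j := fun j hj => h1 j (hST hj)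
    rw [if_pos h1, if_pos h2]
  · rw [if_neg h1]
    split_ifs
    · exact hh χ
    · exact le_rfl

theorem MM_zero {h : Pat E A B → ℝ} (hh : ∀ x, 0 ≤ h x) {S T : Finset ℤ} (hST : S ⊆ T)
    {x : ℤ → E} (h0 : MM h S x = 0) : MM h T x = 0 :=
  le_antisymm (h0 ▸ MM_anti hh hST x) (MM_nonneg hh T x)

theorem MM_sum (h : Pat E A B → ℝ) {S : Finset ℤ} {j : ℤ} (hj : j ∉ S) (x : ℤ → E) :
    ∑ e, MM h (insert j S) (Function.update x j e) = MM h S x := by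
  unfold MM Pr
  rw [Finset.sum_comm]
  apply Finset.sum_congr rfl
  intro χ _
  have key : ∀ e, (∀ k ∈ insert j S, ev χ k = Function.update x j e k) ↔
      (ev χ j = e ∧ ∀ k ∈ S, ev χ k = x k) := by
    intro e
    rw [Finset.forall_mem_insert]
    simp only [Function.update_self]
    refine and_congr_right fun _ => forall₂_congr fun k hk => ?_
    rw [Function.update_of_ne]
    rintro rfl
    exact hj hk
  simp only [key]
  by_cases h1 : ∀ k ∈ S, ev χ k = x k
  · simp only [and_iff_left h1]
    rw [if_pos h1]
    simp
  · simp only [h1, and_false, if_false, Finset.sum_const_zero]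

theorem MM_full (h : Pat E A B → ℝ) (x : ℤ → E) :
    MM h (Icc A B) x = h (fun v => x v.1) := by
  unfold MM Pr
  have key : ∀ χ : Pat E A B, (∀ j ∈ Icc A B, ev χ j = x j) ↔ χ = fun v => x v.1 := by
    intro χ
    constructor
    · intro hh
      funext v
      have := hh v.1 v.2
      rw [ev, dif_pos v.2] at this
      exact this
    · rintro rfl j hj
      rw [ev, dif_pos hj]
  simp only [key]
  simp

theorem Pr_push {α β : Type} [Fintype α] [Fintype β] (h : α → ℝ) (f : α → β) (Q : β → Prop) :
    Pr (fun y => Pr h (fun x => f x = y)) Q = Pr h (fun x => Q (f x)) := by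
  unfold Pr
  have : ∀ y, (if Q y then ∑ x, (if f x = y then h x else 0) else 0)
      = ∑ x, if f x = y then (if Q (f x) then h x else 0) else 0 := by
    intro y
    split_ifs with hq
    · apply Finset.sum_congr rfl
      intro x _
      by_cases hx : f x = y
      · simp [hx, hq]
      · simp [hx]
    · symm
      apply Finset.sum_eq_zero
      intro x _
      by_cases hx : f x = y
      · simp [hx, hq]
      · simp [hx]
  simp only [this]
  rw [Finset.sum_comm]
  simp

theorem ev_win (p q : ℕ) (k : ℤ) (χ : Pat E A B) {v : ℤ} (hv : v ∈ Icc (-(p : ℤ)) (q : ℤ)) :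
    ev (win p q k χ) v = ev χ (k + v) := by
  rw [ev, dif_pos hv]; rfl

theorem Pr_shift [DecidableEq E] (p q : ℕ) (t u : ℤ)
    (h : Pat E (-(p : ℤ) - t) ((q : ℤ) + u) → ℝ) (k : ℤ) (a b : ℤ) (ha : -(p : ℤ) ≤ a)
    (hb : b ≤ q) (x : ℤ → E) :
    Pr (beta p q t u h k) (fun χ => ∀ v ∈ Icc a b, ev χ v = x (k + v))
      = MM h (Icc (k + a) (k + b)) x := by
  unfold beta
  rw [Pr_push]
  apply Pr_congr'
  intro χ
  constructor
  · intro hh j hj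
    rw [mem_Icc] at hj
    have := hh (j - k) (by rw [mem_Icc]; omega)
    rw [ev_win p q k χ (by rw [mem_Icc]; omega)] at this
    simpa using this
  · intro hh v hv
    rw [mem_Icc] at hv
    rw [ev_win p q k χ (by rw [mem_Icc]; omega)]
    exact hh _ (by rw [mem_Icc]; omega)

theorem win_eq_iff (p q : ℕ) (k : ℤ) (χ : Pat E A B) (φ : Pat E (-(p : ℤ)) (q : ℤ)) :
    win p q k χ = φ ↔ ∀ j ∈ Icc (k - p) (k + q), ev χ j = ev φ (j - k) := by
  constructor
  · rintro rfl j hj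
    rw [mem_Icc] at hj
    rw [ev_win p q k χ (by rw [mem_Icc]; omega)]
    congr 1; omega
  · intro hh
    funext v
    have hv := v.2
    rw [mem_Icc] at hv
    have := hh (k + v.1) (by rw [mem_Icc]; omega)
    rw [show k + v.1 - k = v.1 by omega] at this
    rw [win, this, ev, dif_pos v.2]

theorem beta_eq [DecidableEq E] (p q : ℕ) (t u : ℤ)
    (h : Pat E (-(p : ℤ) - t) ((q : ℤ) + u) → ℝ) (k : ℤ) (φ : Pat E (-(p : ℤ)) (q : ℤ)) :
    beta p q t u h k φ = MM h (Icc (k - p) (k + q)) (fun j => ev φ (j - k)) :=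
  Pr_congr' _ fun χ => win_eq_iff p q k χ φ

theorem beta_win [DecidableEq E] (p q : ℕ) (t u : ℤ)
    (h : Pat E (-(p : ℤ) - t) ((q : ℤ) + u) → ℝ) (k : ℤ)
    (ψ : Pat E (-(p : ℤ) - t) ((q : ℤ) + u)) :
    beta p q t u h k (win p q k ψ) = MM h (Icc (k - p) (k + q)) (ev ψ) := by
  rw [beta_eq]
  apply MM_congr
  intro j hj
  rw [mem_Icc] at hj
  rw [ev_win p q k ψ (by rw [mem_Icc]; omega)]
  congr 1; omega

/-- forward factor -/
noncomputable def cF (p q : ℕ) (h : Pat E A B → ℝ) (l : ℤ) (x : ℤ → E) : ℝ :=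
  MM h (Icc (l - p) (l + q)) x / MM h (Icc (l - p) (l - 1 + q)) x

/-- backward factor -/
noncomputable def cB (p q : ℕ) (h : Pat E A B → ℝ) (l : ℤ) (x : ℤ → E) : ℝ :=
  MM h (Icc (l - p) (l + q)) x / MM h (Icc (l + 1 - p) (l + q)) x

theorem condF [DecidableEq E] (p q : ℕ) (t u : ℤ)
    (h : Pat E (-(p : ℤ) - t) ((q : ℤ) + u) → ℝ) (l : ℤ) (x : ℤ → E) :
    condPr (beta p q t u h l) (fun χ => ev χ (q : ℤ) = x (l + (q : ℤ)))
        (fun χ => ∀ v ∈ Finset.Icc (-(p : ℤ)) ((q : ℤ) - 1), ev χ v = x (l + v))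
      = cF p q h l x := by
  unfold condPr cF
  rw [Pr_shift p q t u h l _ _ le_rfl (by omega) x]
  have : Pr (beta p q t u h l) (fun χ => ev χ (q : ℤ) = x (l + (q : ℤ)) ∧
        ∀ v ∈ Finset.Icc (-(p : ℤ)) ((q : ℤ) - 1), ev χ v = x (l + v))
      = Pr (beta p q t u h l) (fun χ => ∀ v ∈ Icc (-(p : ℤ)) (q : ℤ), ev χ v = x (l + v)) := by
    apply Pr_congr'
    intro χ
    rw [← Finset.forall_mem_insert (p := fun v => ev χ v = x (l + v))]
    rw [show insert (q : ℤ) (Icc (-(p : ℤ)) ((q : ℤ) - 1)) = Icc (-(p : ℤ)) (q : ℤ) by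
      ext z; simp only [mem_insert, mem_Icc]; omega]
  rw [this, Pr_shift p q t u h l _ _ le_rfl le_rfl x]
  congr 3 <;> omega

theorem condB [DecidableEq E] (p q : ℕ) (t u : ℤ)
    (h : Pat E (-(p : ℤ) - t) ((q : ℤ) + u) → ℝ) (l : ℤ) (x : ℤ → E) :
    condPr (beta p q t u h l) (fun χ => ev χ (-(p : ℤ)) = x (l + -(p : ℤ)))
        (fun χ => ∀ v ∈ Finset.Icc (-(p : ℤ) + 1) (q : ℤ), ev χ v = x (l + v))
      = cB p q h l x := by
  unfold condPr cB
  rw [Pr_shift p q t u h l _ _ (by omega) le_rfl x]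
  have : Pr (beta p q t u h l) (fun χ => ev χ (-(p : ℤ)) = x (l + -(p : ℤ)) ∧
        ∀ v ∈ Finset.Icc (-(p : ℤ) + 1) (q : ℤ), ev χ v = x (l + v))
      = Pr (beta p q t u h l) (fun χ => ∀ v ∈ Icc (-(p : ℤ)) (q : ℤ), ev χ v = x (l + v)) := by
    apply Pr_congr'
    intro χ
    rw [← Finset.forall_mem_insert (p := fun v => ev χ v = x (l + v))]
    rw [show insert (-(p : ℤ)) (Icc (-(p : ℤ) + 1) (q : ℤ)) = Icc (-(p : ℤ)) (q : ℤ) by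
      ext z; simp only [mem_insert, mem_Icc]; omega]
  rw [this, Pr_shift p q t u h l _ _ le_rfl le_rfl x]
  congr 3; omega

theorem alpha_eq [DecidableEq E] (p q : ℕ) (t u : ℤ)
    (h : Pat E (-(p : ℤ) - t) ((q : ℤ) + u) → ℝ) (i : ℤ)
    (ψ : Pat E (-(p : ℤ) - t) ((q : ℤ) + u)) :
    alpha p q t u (beta p q t u h) i ψ =
      (∏ k ∈ Icc (-t) (i - 1), cB p q h k (ev ψ)) * MM h (Icc (i - p) (i + q)) (ev ψ) *
        ∏ l ∈ Icc (i + 1) u, cF p q h l (ev ψ) := by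
  unfold alpha
  simp only [condF, condB, beta_win]

theorem prod_top (f : ℤ → ℝ) {a b : ℤ} (hab : a ≤ b) :
    ∏ k ∈ Icc a b, f k = (∏ k ∈ Icc a (b - 1), f k) * f b := by
  rw [show Icc a b = insert b (Icc a (b - 1)) by
    ext z; simp only [mem_insert, mem_Icc]; omega]
  rw [Finset.prod_insert (by simp), mul_comm]

theorem prod_bot (f : ℤ → ℝ) {a b : ℤ} (hab : a ≤ b) :
    ∏ k ∈ Icc a b, f k = f a * ∏ k ∈ Icc (a + 1) b, f k := by
  rw [show Icc a b = insert a (Icc (a + 1) b) by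
    ext z; simp only [mem_insert, mem_Icc]; omega]
  rw [Finset.prod_insert (by simp)]

theorem alpha_indep [DecidableEq E] (p q : ℕ) (t u : ℤ)
    (h : Pat E (-(p : ℤ) - t) ((q : ℤ) + u) → ℝ) (i : ℤ) (hi : -t ≤ i) :
    i ≤ u → alpha p q t u (beta p q t u h) i = alpha p q t u (beta p q t u h) (-t) := by
  induction i, hi using Int.le_induction with
  | base => intro _; rfl
  | succ n hn ih =>
    intro hnu
    rw [← ih (by omega)]
    funext ψ
    rw [alpha_eq, alpha_eq, show n + 1 - 1 = n by omega, prod_top _ hn, prod_bot _ hnu]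
    unfold cF cB
    rw [show n + 1 - 1 = n by omega]
    ring

/-- forward partial products -/
noncomputable def FF (p q : ℕ) (h : Pat E A B → ℝ) (a r : ℤ) (x : ℤ → E) : ℝ :=
  MM h (Icc (a - p) (a + q)) x * ∏ l ∈ Icc (a + 1) r, cF p q h l x

theorem FF_succ (p q : ℕ) (h : Pat E A B → ℝ) {a r : ℤ} (har : a ≤ r) (x : ℤ → E) :
    FF p q h a (r + 1) x = FF p q h a r x * cF p q h (r + 1) x := by
  unfold FF
  rw [prod_top _ (by omega : a + 1 ≤ r + 1), show r + 1 - 1 = r by omega]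
  ring

theorem cF_congr (p q : ℕ) (h : Pat E A B → ℝ) (l : ℤ) {x y : ℤ → E}
    (hxy : ∀ j ∈ Icc (l - p) (l + q), x j = y j) : cF p q h l x = cF p q h l y := by
  unfold cF
  rw [MM_congr h hxy, MM_congr h (S := Icc (l - p) (l - 1 + q)) (fun j hj => hxy j (by
    rw [mem_Icc] at *; omega))]

theorem FF_congr (p q : ℕ) (h : Pat E A B → ℝ) {a r : ℤ} (har : a ≤ r) {x y : ℤ → E}
    (hxy : ∀ j ∈ Icc (a - p) (r + q), x j = y j) : FF p q h a r x = FF p q h a r y := by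
  unfold FF
  rw [MM_congr h (S := Icc (a - p) (a + q)) (fun j hj => hxy j (by rw [mem_Icc] at *; omega))]
  congr 1
  apply Finset.prod_congr rfl
  intro l hl
  rw [mem_Icc] at hl
  exact cF_congr p q h l (fun j hj => hxy j (by rw [mem_Icc] at *; omega))

theorem FF_zero (p q : ℕ) {h : Pat E A B → ℝ} {a r : ℤ} (har : a ≤ r)
    {x : ℤ → E} (h0 : MM h (Icc (r - p) (r + q)) x = 0) : FF p q h a r x = 0 := by
  unfold FF
  rcases har.eq_or_lt with rfl | hlt
  · rw [h0, zero_mul]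
  · rw [Finset.prod_eq_zero (i := r) (by rw [mem_Icc]; omega) (by rw [cF, h0, zero_div]), mul_zero]

theorem FF_nonneg (p q : ℕ) {h : Pat E A B → ℝ} (hh : ∀ x, 0 ≤ h x) (a r : ℤ)
    (x : ℤ → E) : 0 ≤ FF p q h a r x :=
  mul_nonneg (MM_nonneg hh _ _) (Finset.prod_nonneg fun _ _ =>
    div_nonneg (MM_nonneg hh _ _) (MM_nonneg hh _ _))

theorem sum_top (h : Pat E A B → ℝ) {a b : ℤ} (hab : a ≤ b + 1) (x : ℤ → E) :
    ∑ e, MM h (Icc a (b + 1)) (Function.update x (b + 1) e) = MM h (Icc a b) x := by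
  rw [← MM_sum h (S := Icc a b) (j := b + 1) (by simp)]
  rw [show insert (b + 1) (Icc a b) = Icc a (b + 1) by
    ext z; simp only [mem_insert, mem_Icc]; omega]

theorem sum_bot (h : Pat E A B → ℝ) {a b : ℤ} (hab : a ≤ b) (x : ℤ → E) :
    ∑ e, MM h (Icc a b) (Function.update x a e) = MM h (Icc (a + 1) b) x := by
  rw [← MM_sum h (S := Icc (a + 1) b) (j := a) (by simp)]
  rw [show insert a (Icc (a + 1) b) = Icc a b by
    ext z; simp only [mem_insert, mem_Icc]; omega]

theorem FF_sum (p q : ℕ) {h : Pat E A B → ℝ} (hh : ∀ x, 0 ≤ h x) {a r : ℤ} (har : a ≤ r)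
    (x : ℤ → E) :
    ∑ e, FF p q h a (r + 1) (Function.update x (r + 1 + q) e) = FF p q h a r x := by
  have e1 : ∀ e, FF p q h a (r + 1) (Function.update x (r + 1 + q) e) =
      FF p q h a r x / MM h (Icc (r + 1 - p) (r + q)) x *
        MM h (Icc (r + 1 - p) (r + q + 1)) (Function.update x (r + q + 1) e) := by
    intro e
    have ha : ∀ j : ℤ, j ≤ r + q → Function.update x (r + 1 + q) e j = x j := fun j hj =>
      Function.update_of_ne (by omega) _ _
    rw [FF_succ p q h har, FF_congr p q h har (y := x) (fun j hj => ha j (mem_Icc.1 hj).2), cF,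
      show r + 1 - 1 = r by omega,
      MM_congr h (S := Icc (r + 1 - p) (r + q)) (y := x) (fun j hj => ha j (mem_Icc.1 hj).2),
      show r + 1 + (q : ℤ) = r + q + 1 by omega]
    ring
  simp only [e1]
  rw [← Finset.mul_sum, sum_top h (by omega)]
  by_cases h0 : MM h (Icc (r + 1 - p) (r + q)) x = 0
  · rw [h0, mul_zero, FF_zero p q har (MM_zero hh (Icc_subset_Icc (by omega) le_rfl) h0)]
  · field_simp

theorem T_eq (p q : ℕ) {A₁ B₁ : ℤ} {h : Pat E A₁ B₁ → ℝ} (hh : ∀ x, 0 ≤ h x) (k : Pat E A B → ℝ)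
    {a u : ℤ} (hau : a ≤ u) (hA : A = a - p) (hB : B = u + q)
    (hk : ∀ ψ, k ψ = FF p q h a u (ev ψ)) (r : ℤ) (hr : r ≤ u) :
    a ≤ r → ∀ x, MM k (Icc (a - p) (r + q)) x = FF p q h a r x := by
  subst hA hB
  induction r, hr using Int.le_induction_down with
  | base =>
    intro _ x
    rw [MM_full, hk]
    apply FF_congr p q h hau
    intro j hj
    rw [ev, dif_pos hj]
  | pred n hn ih =>
    intro han x
    have ih' := ih (by omega)
    obtain ⟨m, rfl⟩ : ∃ m, n = m + 1 := ⟨n - 1, by omega⟩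
    rw [show m + 1 - 1 = m by omega] at *
    rw [← FF_sum p q hh han, ← sum_top k (by omega)]
    apply Finset.sum_congr rfl
    intro e _
    rw [← ih', show m + 1 + (q : ℤ) = m + q + 1 by omega]

theorem T_factor (p q : ℕ) {A₁ B₁ : ℤ} {h : Pat E A₁ B₁ → ℝ} (k : Pat E A B → ℝ)
    {a r : ℤ} (har : a ≤ r)
    (h1 : ∀ x, MM k (Icc (a - p) (r + 1 + q)) x = MM k (Icc (a - p) (r + q)) x * cF p q h (r + 1) x)
    (s : ℤ) (hs : a - p ≤ s) :
    s ≤ r + 1 - p → ∀ x, MM k (Icc s (r + 1 + q)) x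
      = MM k (Icc s (r + q)) x * cF p q h (r + 1) x := by
  induction s, hs using Int.le_induction with
  | base => intro _; exact h1
  | succ n hn ih =>
    intro hnr x
    rw [← sum_bot k (by omega), ← sum_bot k (by omega), Finset.sum_mul]
    apply Finset.sum_congr rfl
    intro e _
    rw [ih (by omega)]
    congr 1
    apply cF_congr
    intro j hj
    rw [mem_Icc] at hj
    exact Function.update_of_ne (by omega) _ _

theorem T_marg (p q : ℕ) {A₁ B₁ : ℤ} {h : Pat E A₁ B₁ → ℝ} (hh : ∀ x, 0 ≤ h x)
    (k : Pat E A B → ℝ) {a u : ℤ}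
    (hT : ∀ r, r ≤ u → a ≤ r → ∀ x, MM k (Icc (a - p) (r + q)) x = FF p q h a r x)
    (r : ℤ) (hr : a ≤ r) :
    r ≤ u → ∀ x, MM k (Icc (r - p) (r + q)) x = MM h (Icc (r - p) (r + q)) x := by
  induction r, hr using Int.le_induction with
  | base =>
    intro hu x
    rw [hT a hu le_rfl, FF]
    simp
  | succ n hn ih =>
    intro hu x
    have ih' := ih (by omega)
    have hm : MM k (Icc (n + 1 - p) (n + q)) x = MM h (Icc (n + 1 - p) (n + q)) x := by
      rw [show n + 1 - (p : ℤ) = n - p + 1 by omega, ← sum_bot k (by omega), ← sum_bot h (by omega)]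
      simp only [ih']
    rw [T_factor p q (h := h) k hn _ (n + 1 - p) (by omega) le_rfl, hm, cF,
      show n + 1 - 1 = n by omega]
    · by_cases h0 : MM h (Icc (n + 1 - p) (n + q)) x = 0
      · rw [h0, zero_mul, MM_zero hh (Icc_subset_Icc le_rfl (by omega)) h0]
      · field_simp
    · intro y
      rw [hT _ hu (by omega), hT _ (by omega) hn, FF_succ p q h hn]

theorem alpha_congr' [DecidableEq E] (p q : ℕ) (t u : ℤ)
    (b b₁ : ℤ → Pat E (-(p : ℤ)) (q : ℤ) → ℝ) (hb : ∀ j ∈ Icc (-t) u, b j = b₁ j)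
    (i : ℤ) (hi : i ∈ Icc (-t) u) : alpha p q t u b i = alpha p q t u b₁ i := by
  funext ψ
  unfold alpha
  rw [hb i hi]
  rw [mem_Icc] at hi
  congr 1
  · congr 1
    apply Finset.prod_congr rfl
    intro k hk
    rw [hb k (by rw [mem_Icc] at *; omega)]
  · apply Finset.prod_congr rfl
    intro k hk
    rw [hb k (by rw [mem_Icc] at *; omega)]

theorem beta_sum [DecidableEq E] (p q : ℕ) (t u : ℤ)
    (h : Pat E (-(p : ℤ) - t) ((q : ℤ) + u) → ℝ) (k : ℤ) :
    ∑ φ, beta p q t u h k φ = ∑ χ, h χ := by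
  have := Pr_push h (win p q k) (fun _ => True)
  unfold Pr at this
  simpa [beta, Pr] using this

end helpers

/-- existence of a `V`-factorizable representative. -/
theorem stmt_8
    (E : Type) [Fintype E] [DecidableEq E] [Nonempty E]
    (p q : ℕ) (t u : ℤ) (htu : -t ≤ u)
    (g : Pat E (-(p : ℤ) - t) ((q : ℤ) + u) → ℝ) (hg : IsDensity g) :
    ∃ gtil : Pat E (-(p : ℤ) - t) ((q : ℤ) + u) → ℝ,
      IsDensity gtil ∧
      (∀ i ∈ Finset.Icc (-t) u, alpha p q t u (beta p q t u gtil) i = gtil) ∧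
      (∀ j ∈ Finset.Icc (-t) u, beta p q t u gtil j = beta p q t u g j) := by
 
  have hk : ∀ ψ, alpha p q t u (beta p q t u g) (-t) ψ = FF p q g (-t) u (ev ψ) := by
    intro ψ
    rw [alpha_eq, FF]
    simp
  have hT := T_eq p q hg.1 (alpha p q t u (beta p q t u g) (-t)) htu (by omega) (by omega) hk
  have hM := T_marg p q hg.1 (alpha p q t u (beta p q t u g) (-t)) hT
  have hb : ∀ j ∈ Finset.Icc (-t) u,
      beta p q t u (alpha p q t u (beta p q t u g) (-t)) j = beta p q t u g j := by
    intro j hj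
    rw [Finset.mem_Icc] at hj
    funext φ
    rw [beta_eq, beta_eq, hM j hj.1 hj.2]
  refine ⟨alpha p q t u (beta p q t u g) (-t), ⟨?_, ?_⟩, ?_, hb⟩
  · intro ψ
    rw [hk]
    exact FF_nonneg p q hg.1 _ _ _
  · rw [← beta_sum p q t u _ (-t), hb (-t) (by rw [Finset.mem_Icc]; omega), beta_sum, hg.2]
  · intro i hi
    rw [alpha_congr' p q t u _ _ hb i hi]
    rw [Finset.mem_Icc] at hi
    exact alpha_indep p q t u g i hi.1 hi.2
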